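/- arXiv:1406.7098 — 14 statements merged into one kernel-verified Lean document; each statement's English description precedes it below -/
import Mathlib

section
/- For every side-information digraph E on Fin n, the minimum length ℓ over all linear index codes for E equals minrk₂(E): there exists a linear index code for E of length minrk₂(E), and every linear index code for E has length at least minrk₂(E). -/
/-- A matrix `A` over `ZMod 2` fits the side-information digraph `E` if it has ones on the
diagonal and zeros at all off-diagonal non-edge positions. -/
def Fits {n : ℕ} (E : Fin n → Fin n → Prop) (A : Matrix (Fin n) (Fin n) (ZMod 2)) : Prop :=
  (∀ i, A i i = 1) ∧ ∀ i j, i ≠ j → ¬E i j → A i j = 0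

/-- `minrk₂` of a side-information digraph: the minimum `ZMod 2` rank over matrices fitting it. -/
noncomputable def minrk2 {n : ℕ} (E : Fin n → Fin n → Prop) : ℕ :=
  sInf {r : ℕ | ∃ A : Matrix (Fin n) (Fin n) (ZMod 2), Fits E A ∧ A.rank = r}

/-- `Enc` is (the encoding map of) an index code of length `ℓ` for the side-information
digraph `E`: every client `i` can decode `x i` from the encoded word and the restriction of
`x` to its side information `{j | E i j}`. -/
def IsIndexCode {n ℓ : ℕ} (E : Fin n → Fin n → Prop)
    (Enc : (Fin n → ZMod 2) → (Fin ℓ → ZMod 2)) : Prop :=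
  ∃ Dec : (i : Fin n) → (Fin ℓ → ZMod 2) → ({j : Fin n // E i j} → ZMod 2) → ZMod 2,
    ∀ (x : Fin n → ZMod 2) (i : Fin n), Dec i (Enc x) (fun j => x j.1) = x i

/-- There is an index code of length `ℓ` for `E`. -/
def HasIndexCode {n : ℕ} (E : Fin n → Fin n → Prop) (ℓ : ℕ) : Prop :=
  ∃ Enc : (Fin n → ZMod 2) → (Fin ℓ → ZMod 2), IsIndexCode E Enc

/-- There is a linear index code of length `ℓ` for `E`. -/
def HasLinearIndexCode {n : ℕ} (E : Fin n → Fin n → Prop) (ℓ : ℕ) : Prop :=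
  ∃ Enc : (Fin n → ZMod 2) → (Fin ℓ → ZMod 2),
    IsLinearMap (ZMod 2) Enc ∧ IsIndexCode E Enc

/-- The minimal index code length `ℓ*(E)`. -/
noncomputable def minIndexCodeLength {n : ℕ} (E : Fin n → Fin n → Prop) : ℕ :=
  sInf {ℓ : ℕ | HasIndexCode E ℓ}

/-- A directed cycle of `E`: a list of at least two distinct vertices with an edge from each
vertex to the cyclically next one. -/
def IsDirCycle {n : ℕ} (E : Fin n → Fin n → Prop) (c : List (Fin n)) : Prop :=
  2 ≤ c.length ∧ c.Nodup ∧
    ∀ t : Fin c.length,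
      E (c.get t) (c.get ⟨(t.1 + 1) % c.length, Nat.mod_lt _ t.pos⟩)

/-- The minimum length of a linear index code for a side-information digraph `E` equals
`minrk₂(E)`: a linear index code of length `minrk₂(E)` exists, and no shorter linear index
code exists. -/
theorem minLinearIndexCodeLength_eq_minrk2
    (n : ℕ) (hn : 1 ≤ n) (E : Fin n → Fin n → Prop) (hirr : ∀ i, ¬E i i) :
    HasLinearIndexCode E (minrk2 E) ∧
      ∀ ℓ : ℕ, HasLinearIndexCode E ℓ → minrk2 E ≤ ℓ := by
  classical
  constructor
  · have hne : {r : ℕ | ∃ A : Matrix (Fin n) (Fin n) (ZMod 2), Fits E A ∧ A.rank = r}.Nonempty :=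
      ⟨_, 1, ⟨fun i => by simp, fun i j hij _ => Matrix.one_apply_ne hij⟩, rfl⟩
    obtain ⟨A, ⟨hd, hz⟩, hr⟩ := Nat.sInf_mem hne
    change A.rank = minrk2 E at hr
    have hf : Module.finrank (ZMod 2) (LinearMap.range A.mulVecLin)
        = Module.finrank (ZMod 2) (Fin (minrk2 E) → ZMod 2) := by
      rw [Module.finrank_fin_fun, ← hr]; rfl
    let e := LinearEquiv.ofFinrankEq _ _ hf
    refine ⟨fun x => e (A.mulVecLin.rangeRestrict x),
      (e.toLinearMap.comp A.mulVecLin.rangeRestrict).isLinear,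
      fun i y s => (e.symm y).1 i - ∑ j : {j // E i j}, A i j.1 * s j, ?_⟩
    intro x i
    simp only [LinearEquiv.symm_apply_apply]
    change (A.mulVec x) i - _ = _
    have h1 : (A.mulVec x) i = ∑ j, A i j * x j := rfl
    have h2 : ∑ j : {j // E i j}, A i j.1 * x j.1 = ∑ j, if E i j then A i j * x j else 0 := by
      rw [← Finset.sum_filter]
      exact (Finset.sum_subtype _ (by simp) (fun j => A i j * x j)).symm
    rw [h1, h2, ← Finset.sum_sub_distrib, Finset.sum_eq_single i]
    · simp [hirr, hd]
    · intro j _ hj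
      by_cases h : E i j
      · simp [h]
      · simp [h, hz i j (Ne.symm hj) h]
    · simp
  · rintro ℓ ⟨Enc, hlin, Dec, hDec⟩
    obtain ⟨L, rfl⟩ : ∃ L : (Fin n → ZMod 2) →ₗ[ZMod 2] (Fin ℓ → ZMod 2), ⇑L = Enc :=
      ⟨hlin.mk' Enc, rfl⟩
    have key : ∀ i, ∃ c : Fin ℓ ⊕ {j // E i j} → ZMod 2, ∀ x : Fin n → ZMod 2,
        ∑ k, c (Sum.inl k) * L x k + ∑ j : {j // E i j}, c (Sum.inr j) * x j.1 = x i := by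
      intro i
      let F : Fin ℓ ⊕ {j // E i j} → ((Fin n → ZMod 2) →ₗ[ZMod 2] ZMod 2) :=
        Sum.elim (fun k => (LinearMap.proj k).comp L) (fun j => LinearMap.proj j.1)
      have hk : ⨅ t, LinearMap.ker (F t)
          ≤ LinearMap.ker (LinearMap.proj i : (Fin n → ZMod 2) →ₗ[ZMod 2] ZMod 2) := by
        intro x hx
        rw [Submodule.mem_iInf] at hx
        have hL : L x = L 0 := by
          rw [map_zero]
          funext k
          exact hx (Sum.inl k)
        have hs : (fun j : {j // E i j} => x j.1) = fun j => (0 : Fin n → ZMod 2) j.1 := by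
          funext j
          exact hx (Sum.inr j)
        have h := hDec x i
        rw [hL, hs, hDec 0 i] at h
        exact h.symm
      obtain ⟨c, hc⟩ := (Submodule.mem_span_range_iff_exists_fun (ZMod 2)).1
        (mem_span_of_iInf_ker_le_ker hk)
      refine ⟨c, fun x => ?_⟩
      have h := LinearMap.congr_fun hc x
      simpa [F, Fintype.sum_sum_type] using h
    choose c hc using key
    let G : Matrix (Fin n) (Fin ℓ) (ZMod 2) := fun i k => c i (Sum.inl k)
    let M : Matrix (Fin ℓ) (Fin n) (ZMod 2) := fun k j => L (Pi.single j 1) k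
    have hA : ∀ i j, ¬ E i j → (G * M) i j = (Pi.single j 1 : Fin n → ZMod 2) i := by
      intro i j hij
      rw [← hc i (Pi.single j 1), Matrix.mul_apply, left_eq_add]
      refine Finset.sum_eq_zero fun t _ => ?_
      have : t.1 ≠ j := fun h => hij (h ▸ t.2)
      simp [this]
    have hfit : Fits E (G * M) := by
      refine ⟨fun i => ?_, fun i j hij hE => ?_⟩
      · simp [hA i i (hirr i)]
      · simp [hA i j hE, hij]
    have hle : minrk2 E ≤ (G * M).rank := Nat.sInf_le ⟨G * M, hfit, rfl⟩
    exact hle.trans ((Matrix.rank_mul_le_right G M).trans M.rank_le_height)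
end

section
/- For every side-information digraph E on Fin n and every n×n matrix A over ZMod 2 that fits E, there exists a linear index code for E whose length equals the ZMod 2 rank of A. -/
/-- For every matrix `A` fitting the side-information digraph `E`, there is a linear index
code for `E` whose length equals the `ZMod 2` rank of `A`. -/
theorem hasLinearIndexCode_of_fits
    (n : ℕ) (hn : 1 ≤ n) (E : Fin n → Fin n → Prop) (hirr : ∀ i, ¬E i i)
    (A : Matrix (Fin n) (Fin n) (ZMod 2)) (hA : Fits E A) :
    HasLinearIndexCode E A.rank := by
  classical
  let e : LinearMap.range A.mulVecLin ≃ₗ[ZMod 2] (Fin A.rank → ZMod 2) :=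
    (Module.finBasis (ZMod 2) (LinearMap.range A.mulVecLin)).equivFun
  let f : (Fin n → ZMod 2) →ₗ[ZMod 2] (Fin A.rank → ZMod 2) :=
    e.toLinearMap.comp A.mulVecLin.rangeRestrict
  refine ⟨f, f.isLinear, fun i y s => (e.symm y).1 i -
    ∑ j, (if h : E i j then A i j * s ⟨j, h⟩ else 0), ?_⟩
  intro x i
  have h1 : (e.symm (f x)).1 i = ∑ j, A i j * x j := by
    simp [f, Matrix.mulVec, dotProduct]
  change (e.symm (f x)).1 i - ∑ j, (if h : E i j then A i j * x j else 0) = x i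
  rw [h1, ← Finset.sum_sub_distrib, Finset.sum_eq_single i]
  · simp [hirr i, hA.1 i]
  · intro j _ hj
    by_cases h : E i j
    · simp [h]
    · simp [h, hA.2 i j hj.symm h]
  · simp
end

section
/- Let E be a side-information digraph on Fin n and let S ⊆ Fin n be an independent set of E, i.e., ¬E i j for all distinct i, j ∈ S. Then every index code for E (not necessarily linear) has length at least |S|. -/
/-- Every index code (not necessarily linear) for a side-information digraph `E` has length
at least the size of any independent set of `E`. -/
theorem indepSet_le_indexCodeLength
    (n : ℕ) (hn : 1 ≤ n) (E : Fin n → Fin n → Prop) (hirr : ∀ i, ¬E i i)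
    (S : Finset (Fin n)) (hS : ∀ i ∈ S, ∀ j ∈ S, i ≠ j → ¬E i j)
    (ℓ : ℕ) (hcode : HasIndexCode E ℓ) :
    S.card ≤ ℓ := by
  classical
  obtain ⟨Enc, Dec, hDec⟩ := hcode
  let ext : (S → ZMod 2) → (Fin n → ZMod 2) :=
    fun y j => if h : j ∈ S then y ⟨j, h⟩ else 0
  have hinj : Function.Injective (fun y => Enc (ext y)) := by
    intro y z hyz
    have hyz' : Enc (ext y) = Enc (ext z) := hyz
    funext i
    have h1 := hDec (ext y) i.1
    have h2 := hDec (ext z) i.1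
    have hside : (fun j : {j : Fin n // E i.1 j} => ext y j.1) = fun j => ext z j.1 := by
      funext j
      have hj : j.1 ∉ S := by
        intro hj
        by_cases hij : i.1 = j.1
        · have hE := j.2
          rw [← hij] at hE
          exact hirr i.1 hE
        · exact hS i.1 i.2 j.1 hj hij j.2
      simp [ext, hj]
    rw [hyz', hside, h2] at h1
    simpa [ext] using h1.symm
  have hcard := Fintype.card_le_of_injective _ hinj
  simp only [Fintype.card_fun, ZMod.card, Fintype.card_coe, Fintype.card_fin] at hcard
  exact (Nat.pow_le_pow_iff_right (by norm_num)).1 hcard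
end

section
/- Let E be a side-information digraph on Fin n and suppose Fin n can be partitioned into m pairwise disjoint cliques of E (sets S with E i j for all distinct i, j ∈ S). Then there exists a linear index code for E of length m, namely the code whose m transmitted symbols are the XOR (sum over ZMod 2) of the messages in each clique. -/
/-- If `Fin n` is partitioned into `m` pairwise disjoint cliques of the side-information
digraph `E`, then the map transmitting, for each clique, the XOR (sum over `ZMod 2`) of the
messages in that clique is a linear index code for `E` of length `m`. -/
theorem cliquePartition_gives_linear_indexCode
    (n m : ℕ) (hn : 1 ≤ n) (E : Fin n → Fin n → Prop) (hirr : ∀ i, ¬E i i)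
    (P : Fin m → Finset (Fin n))
    (hdisj : ∀ a b : Fin m, a ≠ b → Disjoint (P a) (P b))
    (hcover : ∀ i : Fin n, ∃ a : Fin m, i ∈ P a)
    (hclique : ∀ a : Fin m, ∀ i ∈ P a, ∀ j ∈ P a, i ≠ j → E i j) :
    IsLinearMap (ZMod 2) (fun (x : Fin n → ZMod 2) (a : Fin m) => ∑ i ∈ P a, x i) ∧
      IsIndexCode E (fun (x : Fin n → ZMod 2) (a : Fin m) => ∑ i ∈ P a, x i) ∧
      HasLinearIndexCode E m := by
  classical
  have hlin : IsLinearMap (ZMod 2)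
      (fun (x : Fin n → ZMod 2) (a : Fin m) => ∑ i ∈ P a, x i) := by
    constructor
    · intro x y
      funext a
      simp [Finset.sum_add_distrib]
    · intro c x
      funext a
      simp [Finset.mul_sum]
  have hcode : IsIndexCode E
      (fun (x : Fin n → ZMod 2) (a : Fin m) => ∑ i ∈ P a, x i) := by
    choose f hf using hcover
    refine ⟨fun i y z => y (f i) -
      ∑ j ∈ (P (f i)).erase i, (if h : E i j then z ⟨j, h⟩ else 0), ?_⟩
    intro x i
    have h : ∑ j ∈ (P (f i)).erase i, (if _h : E i j then x j else 0)
        = ∑ j ∈ (P (f i)).erase i, x j := by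
      refine Finset.sum_congr rfl fun j hj => ?_
      rw [Finset.mem_erase] at hj
      rw [dif_pos (hclique (f i) i (hf i) j hj.2 hj.1.symm)]
    show ∑ j ∈ P (f i), x j -
      ∑ j ∈ (P (f i)).erase i, (if _h : E i j then x j else 0) = x i
    rw [h, ← Finset.add_sum_erase (P (f i)) x (hf i), add_sub_cancel_right]
  exact ⟨hlin, hcode, _, hlin, hcode⟩
end

section
/- Let E be a side-information digraph on Fin n. Then (i) for every independent set S of E (¬E i j for all distinct i, j ∈ S) and every matrix A fitting E, the ZMod 2 rank of A is at least |S|, so the maximum size of an independent set of E is at most minrk₂(E); and (ii) whenever Fin n can be partitioned into m pairwise disjoint cliques of E, one has minrk₂(E) ≤ m; hence the maximum independent set size of E ≤ minrk₂(E) ≤ the minimum number of cliques of E needed to partition Fin n. -/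
/-- Sandwich bounds for `minrk₂`: (i) any independent set of `E` has size at most the rank of
any matrix fitting `E`, hence at most `minrk₂(E)`; (ii) if `Fin n` is partitioned into `m`
pairwise disjoint cliques of `E` then `minrk₂(E) ≤ m`. -/
theorem indep_le_minrk2_le_cliquePartition
    (n : ℕ) (hn : 1 ≤ n) (E : Fin n → Fin n → Prop) (hirr : ∀ i, ¬E i i) :
    (∀ S : Finset (Fin n), (∀ i ∈ S, ∀ j ∈ S, i ≠ j → ¬E i j) →
      ∀ A : Matrix (Fin n) (Fin n) (ZMod 2), Fits E A → S.card ≤ A.rank) ∧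
    (∀ S : Finset (Fin n), (∀ i ∈ S, ∀ j ∈ S, i ≠ j → ¬E i j) → S.card ≤ minrk2 E) ∧
    (∀ (m : ℕ) (P : Fin m → Finset (Fin n)),
      (∀ a b : Fin m, a ≠ b → Disjoint (P a) (P b)) →
      (∀ i : Fin n, ∃ a : Fin m, i ∈ P a) →
      (∀ a : Fin m, ∀ i ∈ P a, ∀ j ∈ P a, i ≠ j → E i j) →
      minrk2 E ≤ m) := by
  have h1 : ∀ S : Finset (Fin n), (∀ i ∈ S, ∀ j ∈ S, i ≠ j → ¬E i j) →
      ∀ A : Matrix (Fin n) (Fin n) (ZMod 2), Fits E A → S.card ≤ A.rank := by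
    intro S hS A hA
    have hsub : A.submatrix (fun i : S => i.1) (fun i : S => i.1) = 1 := by
      ext i j
      by_cases hij : i = j
      · subst hij
        simp [hA.1]
      · have hne : i.1 ≠ j.1 := fun h => hij (Subtype.ext h)
        simp [hij, hA.2 _ _ hne (hS _ i.2 _ j.2 hne)]
    have h := A.rank_submatrix_le (fun i : S => i.1) (fun i : S => i.1)
    rw [hsub, Matrix.rank_one] at h
    simpa using h
  refine ⟨h1, ?_, ?_⟩
  · intro S hS
    apply le_csInf
    · refine ⟨_, 1, ⟨fun i => by simp, fun i j hij _ => by simp [hij]⟩, rfl⟩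
    · rintro r ⟨A, hA, rfl⟩
      exact h1 S hS A hA
  · intro m P _ hcov hcl
    choose f hf using hcov
    have hfit : Fits E ((1 : Matrix (Fin m) (Fin m) (ZMod 2)).submatrix f f) := by
      refine ⟨fun i => by simp, fun i j hij hE => ?_⟩
      have hne : f i ≠ f j := fun h => hE (hcl (f i) i (hf i) j (h ▸ hf j) hij)
      simp [hne]
    have hle : minrk2 E ≤ ((1 : Matrix (Fin m) (Fin m) (ZMod 2)).submatrix f f).rank :=
      Nat.sInf_le ⟨_, hfit, rfl⟩
    refine hle.trans ?_
    refine (Matrix.rank_submatrix_le _ f f).trans ?_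
    simp [Matrix.rank_one]
end

section
/- Let E be a side-information digraph on Fin n that contains α pairwise vertex-disjoint directed cycles. Then there exists a linear index code for E of length n − α; in particular the minimal index code length satisfies ℓ*(E) ≤ n − α. -/
/-- If the side-information digraph `E` contains `α` pairwise vertex-disjoint directed
cycles, then there is a linear index code for `E` of length `n - α`; in particular
`ℓ*(E) ≤ n - α`. -/
theorem vertexDisjointCycles_indexCode_bound
    (n : ℕ) (hn : 1 ≤ n) (E : Fin n → Fin n → Prop) (hirr : ∀ i, ¬E i i)
    (α : ℕ) (cyc : Fin α → List (Fin n))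
    (hcyc : ∀ a : Fin α, IsDirCycle E (cyc a))
    (hdisj : ∀ a b : Fin α, a ≠ b → ∀ v : Fin n, v ∈ cyc a → v ∉ cyc b) :
    HasLinearIndexCode E (n - α) ∧ minIndexCodeLength E ≤ n - α := by
  have key : HasLinearIndexCode E (n - α) := by
    classical
    have hlen : ∀ a, 2 ≤ (cyc a).length := fun a => (hcyc a).1
    -- the special vertex of each cycle is its last one
    let s : Fin α → Fin n := fun a => (cyc a)[(cyc a).length - 1]'(by have := hlen a; omega)
    have hsmem : ∀ a, s a ∈ cyc a := fun a => List.getElem_mem _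
    have hsinj : Function.Injective s := by
      intro a b hab
      by_contra hne
      exact hdisj a b hne (s a) (hsmem a) (hab ▸ hsmem b)
    have hcard : Fintype.card {v : Fin n // v ∉ Set.range s} = n - α := by
      rw [Fintype.card_subtype_compl]
      have : Fintype.card {v : Fin n // v ∈ Set.range s} = α := by
        rw [← Fintype.card_congr (Equiv.ofInjective s hsinj), Fintype.card_fin]
      rw [this, Fintype.card_fin]
    let e : Fin (n - α) ≃ {v : Fin n // v ∉ Set.range s} :=
      (Fintype.equivFinOfCardEq hcard).symm
    -- one linear functional for each vertex
    have hg : ∀ v : Fin n, ∃ g : (Fin n → ZMod 2) →ₗ[ZMod 2] ZMod 2,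
        (∀ (a : Fin α) (t : ℕ) (h : t + 1 < (cyc a).length),
          (cyc a)[t] = v → ∀ x, g x = x v - x ((cyc a)[t + 1])) ∧
        ((∀ a, v ∉ cyc a) → ∀ x, g x = x v) := by
      intro v
      by_cases hv : ∃ (a : Fin α) (t : ℕ) (h : t + 1 < (cyc a).length), (cyc a)[t] = v
      · obtain ⟨a, t, h, hat⟩ := hv
        refine ⟨(LinearMap.proj v : (Fin n → ZMod 2) →ₗ[ZMod 2] ZMod 2) -
          (LinearMap.proj ((cyc a)[t + 1]) : (Fin n → ZMod 2) →ₗ[ZMod 2] ZMod 2), ?_, ?_⟩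
        · intro b u hu hbu x
          have hab : a = b := by
            by_contra hne
            exact hdisj a b hne v (hat ▸ List.getElem_mem _) (hbu ▸ List.getElem_mem _)
          subst hab
          have htu : t = u := ((hcyc a).2.1.getElem_inj_iff).1 (hat.trans hbu.symm)
          subst htu
          simp
        · intro hoff
          exact absurd (hat ▸ List.getElem_mem _) (hoff a)
      · refine ⟨(LinearMap.proj v : (Fin n → ZMod 2) →ₗ[ZMod 2] ZMod 2), ?_, fun _ x => by simp⟩
        intro a t h hat
        exact absurd ⟨a, t, h, hat⟩ hv
    choose g hg1 hg2 using hg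
    let Enc : (Fin n → ZMod 2) →ₗ[ZMod 2] (Fin (n - α) → ZMod 2) :=
      LinearMap.pi (fun k => g (e k).1)
    have hker : ∀ z, Enc z = 0 → ∀ v, v ∉ Set.range s → g v z = 0 := by
      intro z hz v hv
      have h := congrFun hz (e.symm ⟨v, hv⟩)
      simpa [Enc] using h
    have hdec : ∀ z, Enc z = 0 → ∀ i, (∀ j, E i j → z j = 0) → z i = 0 := by
      intro z hz i hi
      by_cases hoff : ∀ a, i ∉ cyc a
      · rw [← hg2 i hoff z]
        refine hker z hz i ?_
        rintro ⟨a, rfl⟩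
        exact hoff a (hsmem a)
      · push Not at hoff
        obtain ⟨a, ha⟩ := hoff
        have hstep : ∀ (t : ℕ) (h : t + 1 < (cyc a).length),
            z ((cyc a)[t]) = z ((cyc a)[t + 1]) := by
          intro t h
          have h1 := hg1 _ a t h rfl z
          rw [hker z hz _ ?_] at h1
          · exact sub_eq_zero.1 h1.symm
          · rintro ⟨b, hb⟩
            have hab : a = b := by
              by_contra hne
              exact hdisj a b hne (s b) (hb ▸ List.getElem_mem _) (hsmem b)
            subst hab
            have := ((hcyc a).2.1.getElem_inj_iff).1 hb
            omega
        have hconst : ∀ (t : ℕ) (h : t < (cyc a).length),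
            z ((cyc a)[t]) = z ((cyc a)[0]'(by omega)) := by
          intro t
          induction t with
          | zero => intro h; rfl
          | succ t ih => intro h; rw [← hstep t h]; exact ih (by omega)
        obtain ⟨t, ht, rfl⟩ := List.getElem_of_mem ha
        have hE := (hcyc a).2.2 ⟨t, ht⟩
        have h0 := hi _ hE
        rw [List.get_eq_getElem, hconst] at h0
        rw [hconst t ht]
        exact h0
    refine ⟨Enc, Enc.isLinear, ?_⟩
    refine ⟨fun i y w => if h : ∃ x, Enc x = y ∧ (fun j : {j : Fin n // E i j} => x j.1) = w
      then h.choose i else 0, ?_⟩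
    intro x i
    have h : ∃ x', Enc x' = Enc x ∧
        (fun j : {j : Fin n // E i j} => x' j.1) = (fun j => x j.1) := ⟨x, rfl, rfl⟩
    simp only [dif_pos h]
    obtain ⟨h1, h2⟩ := h.choose_spec
    have := hdec (h.choose - x) (by rw [map_sub, h1, sub_self]) i (by
      intro j hj
      have h3 := congrFun h2 ⟨j, hj⟩
      simp only at h3
      rw [Pi.sub_apply, h3, sub_self])
    rw [Pi.sub_apply] at this
    exact sub_eq_zero.1 this
  refine ⟨key, ?_⟩
  obtain ⟨Enc, _, hc⟩ := key
  exact Nat.sInf_le ⟨Enc, hc⟩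
end

section
/- Let n ≥ 2 and let E be the directed n-cycle on Fin n, i.e., E i j holds if and only if j = i + 1 (mod n). Then the minimal index code length satisfies ℓ*(E) = n − 1. -/
theorem hasIndexCode_of_agree {n ℓ : ℕ} (E : Fin n → Fin n → Prop)
    (Enc : (Fin n → ZMod 2) → (Fin ℓ → ZMod 2))
    (h : ∀ i x x', Enc x = Enc x' → (∀ j, E i j → x j = x' j) → x i = x' i) :
    HasIndexCode E ℓ := by
  classical
  refine ⟨Enc, fun i c s => if hx : ∃ x, Enc x = c ∧ (fun j : {j // E i j} => x j.1) = s
    then hx.choose i else 0, ?_⟩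
  intro x i
  have hx : ∃ x', Enc x' = Enc x ∧ (fun j : {j // E i j} => x' j.1) = (fun j => x j.1) :=
    ⟨x, rfl, rfl⟩
  simp only [dif_pos hx]
  exact h i _ _ hx.choose_spec.1 (fun j hj => congrFun hx.choose_spec.2 ⟨j, hj⟩)

theorem agree_of_isIndexCode {n ℓ : ℕ} (E : Fin n → Fin n → Prop)
    (Enc : (Fin n → ZMod 2) → (Fin ℓ → ZMod 2)) (hE : IsIndexCode E Enc)
    (i : Fin n) (x x' : Fin n → ZMod 2) (hx : Enc x = Enc x')
    (hj : ∀ j, E i j → x j = x' j) : x i = x' i := by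
  obtain ⟨D, hD⟩ := hE
  rw [← hD x i, ← hD x' i, hx]
  congr 1
  funext j
  exact hj j.1 j.2

theorem dirCycle_upper (m : ℕ) :
    HasIndexCode (fun i j : Fin (m + 1) => (j : ℕ) = ((i : ℕ) + 1) % (m + 1)) m := by
  refine hasIndexCode_of_agree _ (fun x k => x k.castSucc + x k.succ) ?_
  intro i x x' hx hj
  have hk : ∀ k : Fin m, x k.castSucc + x k.succ = x' k.castSucc + x' k.succ :=
    fun k => congrFun hx k
  induction i using Fin.lastCases with
  | last =>
    have h0 : x 0 = x' 0 := hj 0 (by simp)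
    have hall : ∀ i : Fin (m + 1), x i = x' i := by
      intro i
      induction i using Fin.induction with
      | zero => exact h0
      | succ k ih =>
        have h := hk k
        rw [ih] at h
        exact add_left_cancel h
    exact hall _
  | cast k =>
    have h1 : x k.succ = x' k.succ := hj _ (by
      simp only [Fin.val_succ, Fin.val_castSucc]
      rw [Nat.mod_eq_of_lt]
      omega)
    have h := hk k
    rw [h1] at h
    exact add_right_cancel h

theorem dirCycle_lower (m ℓ : ℕ)
    (h : HasIndexCode (fun i j : Fin (m + 1) => (j : ℕ) = ((i : ℕ) + 1) % (m + 1)) ℓ) :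
    m ≤ ℓ := by
  obtain ⟨Enc, hE⟩ := h
  have hinj : Function.Injective
      (fun z : Fin m → ZMod 2 => Enc (Fin.cons 0 z : Fin (m + 1) → ZMod 2)) := by
    intro z z' hz
    have hall : ∀ i : Fin (m + 1), (Fin.cons 0 z : Fin (m + 1) → ZMod 2) i
        = (Fin.cons 0 z' : Fin (m + 1) → ZMod 2) i := by
      intro i
      induction i using Fin.reverseInduction with
      | last =>
        refine agree_of_isIndexCode _ Enc hE _ _ _ hz ?_
        intro j hj
        have : j = 0 := Fin.ext (by simpa using hj)
        subst this
        simp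
      | cast k ih =>
        refine agree_of_isIndexCode _ Enc hE _ _ _ hz ?_
        intro j hj
        have : j = k.succ := Fin.ext (by
          simp only [Fin.val_castSucc] at hj
          rw [hj, Nat.mod_eq_of_lt (by omega), Fin.val_succ])
        subst this
        exact ih
    funext k
    simpa using hall k.succ
  have hc := Fintype.card_le_of_injective _ hinj
  simp only [Fintype.card_fun, ZMod.card, Fintype.card_fin] at hc
  exact (Nat.pow_le_pow_iff_right (by norm_num)).1 hc

/-- For the directed `n`-cycle (`n ≥ 2`), where client `i` knows exactly message `i + 1`
(mod `n`), the minimal index code length is `n - 1`. -/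
theorem minIndexCodeLength_dirCycle
    (n : ℕ) (hn : 2 ≤ n) :
    minIndexCodeLength (fun i j : Fin n => (j : ℕ) = ((i : ℕ) + 1) % n) = n - 1 := by
  obtain ⟨m, rfl⟩ : ∃ m, n = m + 1 := ⟨n - 1, by omega⟩
  rw [Nat.add_sub_cancel]
  exact le_antisymm (Nat.sInf_le (dirCycle_upper m))
    (le_csInf ⟨m, dirCycle_upper m⟩ (fun ℓ h => dirCycle_lower m ℓ h))
end

section
/- Let σ be a permutation of Fin n with no fixed points, and let E be the side-information digraph with E i j if and only if j = σ i (single-uniprior, single-unicast side information: each client i has exactly the one message σ i). Then the minimal index code length satisfies ℓ*(E) = n − ξ, where ξ is the number of cycles of σ. -/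
/-- The setoid on `Fin n` given by the `SameCycle` relation of a permutation. -/
def sameCycleSetoid {n : ℕ} (σ : Equiv.Perm (Fin n)) : Setoid (Fin n) :=
  ⟨σ.SameCycle, ⟨fun x => Equiv.Perm.SameCycle.refl σ x, fun h => h.symm,
    fun h₁ h₂ => h₁.trans h₂⟩⟩

/-- The number of cycles of a permutation: the number of equivalence classes of its
`SameCycle` relation. -/
noncomputable def numCycles {n : ℕ} (σ : Equiv.Perm (Fin n)) : ℕ :=
  Nat.card (Quotient (sameCycleSetoid σ))

/-- The chosen representative of the cycle of `i`. -/
noncomputable def cycRep {n : ℕ} (σ : Equiv.Perm (Fin n)) (i : Fin n) : Fin n :=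
  (Quotient.mk (sameCycleSetoid σ) i).out

theorem cycRep_sameCycle {n : ℕ} (σ : Equiv.Perm (Fin n)) (i : Fin n) :
    σ.SameCycle (cycRep σ i) i :=
  Quotient.exact (s := sameCycleSetoid σ) (Quotient.out_eq _)

theorem cycRep_congr {n : ℕ} (σ : Equiv.Perm (Fin n)) {i j : Fin n} (h : σ.SameCycle i j) :
    cycRep σ i = cycRep σ j := by
  unfold cycRep
  rw [Quotient.sound (s := sameCycleSetoid σ) h]

/-- The clients that are not chosen representatives. -/
abbrev NonRep {n : ℕ} (σ : Equiv.Perm (Fin n)) : Type := {i : Fin n // ¬ cycRep σ i = i}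

theorem card_nonRep {n : ℕ} (σ : Equiv.Perm (Fin n)) :
    Nat.card (NonRep σ) = n - numCycles σ := by
  classical
  have e : {i : Fin n // cycRep σ i = i} ≃ Quotient (sameCycleSetoid σ) :=
    { toFun := fun i => Quotient.mk _ i.1
      invFun := fun q => ⟨q.out, by unfold cycRep; rw [Quotient.out_eq]⟩
      left_inv := fun i => Subtype.ext i.2
      right_inv := fun q => Quotient.out_eq q }
  have h1 : numCycles σ = Fintype.card {i : Fin n // cycRep σ i = i} := by
    unfold numCycles
    rw [← Nat.card_congr e, Nat.card_eq_fintype_card]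
  rw [h1, Nat.card_eq_fintype_card, Fintype.card_subtype_compl, Fintype.card_fin]

theorem agree_back {n : ℕ} (σ : Equiv.Perm (Fin n)) (P : Fin n → Prop)
    (hr : ∀ i, cycRep σ i = i → P i) (hs : ∀ i, P (σ i) → P i) (i : Fin n) : P i := by
  have key : ∀ (k : ℕ) (j : Fin n), P ((σ ^ k) j) → P j := by
    intro k
    induction k with
    | zero => intro j h; simpa using h
    | succ k ih =>
      intro j h
      apply hs
      apply ih
      rwa [pow_succ] at h
  obtain ⟨k, -, -, hk⟩ := (cycRep_sameCycle σ i).symm.exists_pow_eq σ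
  apply key k
  rw [hk]
  exact hr _ (cycRep_congr σ (cycRep_sameCycle σ i))

theorem agree_fwd {n : ℕ} (σ : Equiv.Perm (Fin n)) (P : Fin n → Prop)
    (hs : ∀ i, ¬ cycRep σ i = i → (P i ↔ P (σ i))) (i : Fin n) (h : P (σ i)) : P i := by
  by_cases hi : cycRep σ i = i
  · have key : ∀ k : ℕ, P i ∨ P ((σ ^ (k + 1)) i) := by
      intro k
      induction k with
      | zero => right; simpa using h
      | succ k ih =>
        rcases ih with ih | ih
        · exact Or.inl ih
        · by_cases hj : cycRep σ ((σ ^ (k + 1)) i) = (σ ^ (k + 1)) i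
          · left
            have : cycRep σ i = cycRep σ ((σ ^ (k + 1)) i) :=
              cycRep_congr σ ⟨((k + 1 : ℕ) : ℤ), by rw [zpow_natCast]⟩
            rw [← hi, this, hj]
            exact ih
          · right
            rw [pow_succ' σ (k + 1)]
            exact (hs _ hj).1 ih
    have ho := orderOf_pos σ
    rcases key (orderOf σ - 1) with h' | h'
    · exact h'
    · rw [Nat.sub_add_cancel ho, pow_orderOf_eq_one] at h'
      simpa using h'
  · exact (hs i hi).2 h

theorem hasIndexCode_nonRep {n : ℕ} (σ : Equiv.Perm (Fin n)) :
    HasIndexCode (fun i j : Fin n => j = σ i) (n - numCycles σ) := by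
  classical
  let e : NonRep σ ≃ Fin (n - numCycles σ) := Finite.equivFinOfCardEq (card_nonRep σ)
  let Enc : (Fin n → ZMod 2) → (Fin (n - numCycles σ) → ZMod 2) :=
    fun x k => x (e.symm k).1 + x (σ (e.symm k).1)
  have main : ∀ (x y : Fin n → ZMod 2) (i : Fin n), Enc x = Enc y → x (σ i) = y (σ i) →
      x i = y i := by
    intro x y i hE h
    refine agree_fwd σ (fun i => x i = y i) ?_ i h
    intro j hj
    have := congrFun hE (e ⟨j, hj⟩)
    simp only [Enc, Equiv.symm_apply_apply] at this
    constructor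
    · intro h1
      rw [h1] at this
      exact add_left_cancel this
    · intro h1
      rw [h1] at this
      exact add_right_cancel this
  refine ⟨Enc, fun i c s => if h : ∃ y, Enc y = c ∧ y (σ i) = s ⟨σ i, rfl⟩ then
    h.choose i else 0, ?_⟩
  intro x i
  have h : ∃ y, Enc y = Enc x ∧ y (σ i) = x (σ i) := ⟨x, rfl, rfl⟩
  beta_reduce
  rw [dif_pos h]
  exact main _ _ i h.choose_spec.1 h.choose_spec.2

theorem le_of_hasIndexCode {n : ℕ} (σ : Equiv.Perm (Fin n)) (l : ℕ)
    (h : HasIndexCode (fun i j : Fin n => j = σ i) l) : n - numCycles σ ≤ l := by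
  classical
  obtain ⟨Enc, Dec, hD⟩ := h
  let ext : (NonRep σ → ZMod 2) → (Fin n → ZMod 2) :=
    fun z i => if hi : cycRep σ i = i then 0 else z ⟨i, hi⟩
  have inj : Function.Injective (fun z => Enc (ext z)) := by
    intro z w hzw
    have hall : ∀ i, ext z i = ext w i := by
      refine agree_back σ _ ?_ ?_
      · intro i hi
        simp [ext, hi]
      · intro i hi
        rw [← hD (ext z) i, ← hD (ext w) i]
        have h1 : Enc (ext z) = Enc (ext w) := hzw
        rw [h1]
        congr 1
        funext j
        obtain ⟨j, rfl⟩ := j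
        exact hi
    funext ⟨i, hi⟩
    have := hall i
    simpa [ext, hi] using this
  have hc := Fintype.card_le_of_injective _ inj
  rw [Fintype.card_fun, Fintype.card_fun, ZMod.card, Fintype.card_fin,
    ← Nat.card_eq_fintype_card, card_nonRep] at hc
  exact (Nat.pow_le_pow_iff_right (by norm_num)).1 hc

/-- Single-uniprior, single-unicast side information: client `i` has exactly the one message
`σ i`, for a fixed-point-free permutation `σ`. The minimal index code length is `n - ξ`,
where `ξ` is the number of cycles of `σ`. -/
theorem minIndexCodeLength_singleUniprior
    (n : ℕ) (hn : 1 ≤ n) (σ : Equiv.Perm (Fin n)) (hfix : ∀ i : Fin n, σ i ≠ i) :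
    minIndexCodeLength (fun i j : Fin n => j = σ i) = n - numCycles σ := by
  apply le_antisymm
  · exact Nat.sInf_le (hasIndexCode_nonRep σ)
  · exact le_csInf ⟨_, hasIndexCode_nonRep σ⟩ (fun l hl => le_of_hasIndexCode σ l hl)
end

section
/- Let E be a side-information digraph on Fin n. Then minrk₂(E) = n if and only if E contains no directed cycle. -/
theorem aux_rank {n : ℕ} (A : Matrix (Fin n) (Fin n) (ZMod 2)) :
    A.rank = n ↔ ∀ v, A.mulVec v = 0 → v = 0 := by
  have h := LinearMap.finrank_range_add_finrank_ker A.mulVecLin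
  rw [Module.finrank_fin_fun] at h
  have h2 : A.rank = Module.finrank (ZMod 2) (LinearMap.range A.mulVecLin) := rfl
  have h3 : A.rank = n ↔ Module.finrank (ZMod 2) (LinearMap.ker A.mulVecLin) = 0 := by
    omega
  rw [h3, Submodule.finrank_eq_zero, LinearMap.ker_eq_bot']
  rfl

theorem aux_cycle {n : ℕ} (E : Fin n → Fin n → Prop) (hirr : ∀ i, ¬E i i)
    (S : Set (Fin n)) (x : Fin n) (hx : x ∈ S)
    (h : ∀ i ∈ S, ∃ j ∈ S, E i j) : ∃ c : List (Fin n), IsDirCycle E c := by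
  classical
  choose! f hfS hfE using h
  have hS : ∀ k, ∀ y ∈ S, f^[k] y ∈ S := by
    intro k
    induction k with
    | zero => intro y hy; exact hy
    | succ k ih => intro y hy; exact ih _ (hfS y hy)
  obtain ⟨y, hy, p, hp, hper⟩ : ∃ y ∈ S, ∃ p, 0 < p ∧ f^[p] y = y := by
    obtain ⟨a, b, hab, he⟩ := Finite.exists_ne_map_eq_of_infinite (fun k : ℕ => f^[k] x)
    rcases lt_or_gt_of_ne hab with hl | hl
    · refine ⟨f^[a] x, hS _ _ hx, b - a, by omega, ?_⟩
      rw [← Function.iterate_add_apply, Nat.sub_add_cancel hl.le]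
      exact he.symm
    · refine ⟨f^[b] x, hS _ _ hx, a - b, by omega, ?_⟩
      rw [← Function.iterate_add_apply, Nat.sub_add_cancel hl.le]
      exact he
  have hpos : 0 < Function.minimalPeriod f y :=
    Function.IsPeriodicPt.minimalPeriod_pos hp hper
  have hmod : ∀ k, f^[k % Function.minimalPeriod f y] y = f^[k] y := fun k =>
    Function.iterate_mod_minimalPeriod_eq
  refine ⟨(List.range (Function.minimalPeriod f y)).map (fun k => f^[k] y), ?_, ?_, ?_⟩
  · rw [List.length_map, List.length_range]
    by_contra hlt
    have h1 : Function.minimalPeriod f y = 1 := by omega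
    have h2 : f y = y := Function.minimalPeriod_eq_one_iff_isFixedPt.1 h1
    have h3 := hfE y hy
    rw [h2] at h3
    exact hirr y h3
  · refine List.Nodup.map_on ?_ List.nodup_range
    intro a ha b hb hab
    exact (Function.iterate_eq_iterate_iff_of_lt_minimalPeriod
      (List.mem_range.1 ha) (List.mem_range.1 hb)).1 hab
  · rintro ⟨t, ht⟩
    simp only [List.get_eq_getElem, List.getElem_map, List.getElem_range, List.length_map,
      List.length_range]
    rw [hmod, Function.iterate_succ_apply']
    exact hfE _ (hS _ _ hy)

theorem aux_full {n : ℕ} (E : Fin n → Fin n → Prop) (hirr : ∀ i, ¬E i i)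
    (hc : ¬∃ c : List (Fin n), IsDirCycle E c)
    (A : Matrix (Fin n) (Fin n) (ZMod 2)) (hA : Fits E A) : A.rank = n := by
  rw [aux_rank]
  intro v hv
  by_contra hne
  apply hc
  obtain ⟨x, hx⟩ := Function.ne_iff.1 hne
  refine aux_cycle E hirr {i | v i ≠ 0} x hx ?_
  intro i hi
  by_contra! hno
  apply hi
  have h1 : ∑ j, A i j * v j = 0 := congrFun hv i
  rw [Finset.sum_eq_single i] at h1
  · simpa [hA.1 i] using h1
  · intro j _ hj
    by_cases hvj : v j = 0
    · rw [hvj, mul_zero]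
    · rw [hA.2 i j hj.symm (hno j hvj), zero_mul]
  · simp

theorem aux_low {n : ℕ} (E : Fin n → Fin n → Prop)
    (c : List (Fin n)) (hc : IsDirCycle E c) :
    ∃ A : Matrix (Fin n) (Fin n) (ZMod 2), Fits E A ∧ A.rank ≠ n := by
  classical
  obtain ⟨hlen, hnd, hE⟩ := hc
  have hl0 : 0 < c.length := by omega
  have hσ : ∀ i, c.formPerm i ≠ i → E i (c.formPerm i) := by
    intro i hi
    have hm : i ∈ c := List.mem_of_formPerm_apply_ne hi
    obtain ⟨t, ht, rfl⟩ := List.getElem_of_mem hm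
    rw [List.formPerm_apply_getElem c hnd t ht]
    exact hE ⟨t, ht⟩
  refine ⟨fun i j => if i = j then 1 else if j = c.formPerm i then 1 else 0, ⟨?_, ?_⟩, ?_⟩
  · intro i; simp
  · intro i j hij hn
    simp only [if_neg hij]
    rw [if_neg]
    rintro rfl
    exact hn (hσ i hij.symm)
  · intro hr
    replace hr := (aux_rank _).1 hr
    have h0 := hr (fun i => if c.formPerm i = i then 0 else 1) ?_
    · have h1 := congrFun h0 (c.get ⟨0, hl0⟩)
      have h2 := List.formPerm_apply_getElem c hnd 0 hl0
      have h3 : c.formPerm (c.get ⟨0, hl0⟩) ≠ c.get ⟨0, hl0⟩ := by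
        intro h
        replace h := h2.symm.trans h
        have := (hnd.getElem_inj_iff).1 h
        rw [Nat.mod_eq_of_lt (by omega)] at this
        omega
      simp at h1
      exact h3 h1
    · funext i
      change ∑ j, (if i = j then (1 : ZMod 2) else if j = c.formPerm i then 1 else 0) *
        (if c.formPerm j = j then 0 else 1) = 0
      by_cases hi : c.formPerm i = i
      · apply Finset.sum_eq_zero
        intro j _
        by_cases hj : i = j
        · subst hj; simp [hi]
        · rw [hi, if_neg hj, if_neg (Ne.symm hj), zero_mul]
      · have hi2 : c.formPerm (c.formPerm i) ≠ c.formPerm i := fun h =>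
          hi (c.formPerm.injective h)
        rw [Finset.sum_eq_add i (c.formPerm i) (Ne.symm hi)]
        · simp only [hi, hi2, if_false, if_true, ite_self, Ne.symm hi, mul_one]
          decide
        · intro j _ hj
          rw [if_neg hj.1.symm, if_neg hj.2, zero_mul]
        · simp
        · simp

/-- `minrk₂(E) = n` if and only if the side-information digraph `E` has no directed cycle. -/
theorem minrk2_eq_n_iff_acyclic
    (n : ℕ) (hn : 1 ≤ n) (E : Fin n → Fin n → Prop) (hirr : ∀ i, ¬E i i) :
    minrk2 E = n ↔ ¬∃ c : List (Fin n), IsDirCycle E c := by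
  constructor
  · rintro h ⟨c, hc⟩
    obtain ⟨A, hA, hr⟩ := aux_low E c hc
    have h1 : minrk2 E ≤ A.rank := Nat.sInf_le ⟨A, hA, rfl⟩
    have h2 := A.rank_le_width
    omega
  · intro hc
    have hne : {r : ℕ | ∃ A : Matrix (Fin n) (Fin n) (ZMod 2), Fits E A ∧ A.rank = r}.Nonempty :=
      ⟨_, 1, ⟨fun i => Matrix.one_apply_eq i, fun i j hij _ => Matrix.one_apply_ne hij⟩, rfl⟩
    obtain ⟨A, hA, hr⟩ := Nat.sInf_mem hne
    exact hr.symm.trans (aux_full E hirr hc A hA)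
end

section
/- Let n ≥ 1 and let E be a side-information digraph on Fin n. Then the minimal index code length satisfies ℓ*(E) = 1 if and only if E is complete, i.e., E i j holds for all distinct i, j ∈ Fin n. -/
/-- Words that agree on the side information of `i` but differ at `i` have different codewords. -/
theorem IsIndexCode.ne_of_ne {n ℓ : ℕ} {E : Fin n → Fin n → Prop}
    {Enc : (Fin n → ZMod 2) → (Fin ℓ → ZMod 2)} (h : IsIndexCode E Enc)
    (i : Fin n) (x y : Fin n → ZMod 2) (hxy : ∀ j, E i j → x j = y j) (hi : x i ≠ y i) :
    Enc x ≠ Enc y := by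
  obtain ⟨Dec, hD⟩ := h
  intro he
  apply hi
  rw [← hD x i, ← hD y i, he]
  congr 1
  funext j
  exact hxy j.1 j.2

/-- The minimal index code length of a side-information digraph `E` on `n ≥ 1` clients is `1`
if and only if `E` is complete. -/
theorem minIndexCodeLength_eq_one_iff_complete
    (n : ℕ) (hn : 1 ≤ n) (E : Fin n → Fin n → Prop) (hirr : ∀ i, ¬E i i) :
    minIndexCodeLength E = 1 ↔ ∀ i j : Fin n, i ≠ j → E i j := by
  constructor
  · intro h i j hij
    by_contra hE
    have hne : {ℓ : ℕ | HasIndexCode E ℓ}.Nonempty := by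
      apply Nat.nonempty_of_sInf_eq_succ (k := 0)
      exact h
    have hmem := Nat.sInf_mem hne
    change HasIndexCode E (minIndexCodeLength E) at hmem
    rw [h] at hmem
    obtain ⟨Enc, hc⟩ := hmem
    have h1 : Enc 0 ≠ Enc (Pi.single j 1) := by
      apply hc.ne_of_ne j
      · intro k hk
        have hkj : k ≠ j := fun e => hirr j (e ▸ hk)
        simp [hkj]
      · simp
    have h2 : Enc 0 ≠ Enc (Pi.single i 1) := by
      apply hc.ne_of_ne i
      · intro k hk
        have hki : k ≠ i := fun e => hirr i (e ▸ hk)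
        simp [hki]
      · simp
    have h3 : Enc (Pi.single j 1) ≠ Enc (Pi.single i 1) := by
      apply hc.ne_of_ne i
      · intro k hk
        have hki : k ≠ i := fun e => hirr i (e ▸ hk)
        have hkj : k ≠ j := fun e => hE (e ▸ hk)
        simp [hki, hkj]
      · simp [hij]
    have key : ∀ a b c : Fin 1 → ZMod 2, a ≠ b → a ≠ c → b ≠ c → False := by decide
    exact key _ _ _ h1 h2 h3
  · intro hE
    classical
    have h1 : HasIndexCode E 1 := by
      refine ⟨fun x _ => ∑ j, x j,
        fun i c s => c 0 - ∑ j, if h : E i j then s ⟨j, h⟩ else 0, ?_⟩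
      intro x i
      have hs : (∑ j, if h : E i j then x j else 0) = ∑ j ∈ Finset.univ.erase i, x j := by
        rw [← Finset.add_sum_erase _ _ (Finset.mem_univ i)]
        simp only [hirr i, dite_false, zero_add]
        refine Finset.sum_congr rfl fun j hj => ?_
        rw [dif_pos (hE i j (Finset.ne_of_mem_erase hj).symm)]
      change (∑ j, x j) - (∑ j, if h : E i j then x j else 0) = x i
      rw [hs, ← Finset.add_sum_erase _ _ (Finset.mem_univ i)]
      ring
    have h0 : ¬ HasIndexCode E 0 := by
      rintro ⟨Enc, hc⟩
      refine hc.ne_of_ne ⟨0, hn⟩ 0 (Pi.single ⟨0, hn⟩ 1) ?_ ?_ (Subsingleton.elim _ _)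
      · intro k hk
        have hk0 : k ≠ ⟨0, hn⟩ := fun e => hirr _ (e ▸ hk)
        simp [hk0]
      · simp
    have hle : minIndexCodeLength E ≤ 1 := Nat.sInf_le h1
    have hmem : HasIndexCode E (minIndexCodeLength E) :=
      Nat.sInf_mem (s := {ℓ : ℕ | HasIndexCode E ℓ}) ⟨1, h1⟩
    have hpos : minIndexCodeLength E ≠ 0 := fun e => h0 (e ▸ hmem)
    omega
end

section
/- Let n ≥ 2 and let E be the symmetric star side-information digraph on Fin n with center 0: E i j holds if and only if i ≠ j and (i = 0 or j = 0). Then the minimal index code length satisfies ℓ*(E) = n − 1. -/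
/-- For the symmetric star side-information digraph on `Fin n` (`n ≥ 2`) with center `0`,
the minimal index code length is `n - 1`. -/
theorem minIndexCodeLength_star
    (n : ℕ) (hn : 2 ≤ n) :
    minIndexCodeLength
      (fun i j : Fin n => i ≠ j ∧ ((i : ℕ) = 0 ∨ (j : ℕ) = 0)) = n - 1 := by
  obtain ⟨m, rfl⟩ : ∃ m, n = m + 2 := ⟨n - 2, by omega⟩
  have hup : HasIndexCode (fun i j : Fin (m + 2) => i ≠ j ∧ ((i : ℕ) = 0 ∨ (j : ℕ) = 0))
      (m + 1) := by
    refine ⟨fun x k => x 0 + x k.succ, fun i c s =>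
      if h : i = 0 then c 0 - s ⟨1, by subst h; simp⟩
      else c (i.pred h) - s ⟨0, h, Or.inr rfl⟩, ?_⟩
    intro x i
    by_cases h : i = 0
    · subst h
      simp
    · simp [h]
  have hlow : ∀ l, HasIndexCode
      (fun i j : Fin (m + 2) => i ≠ j ∧ ((i : ℕ) = 0 ∨ (j : ℕ) = 0)) l → m + 1 ≤ l := by
    rintro l ⟨Enc, Dec, hD⟩
    have hinj : Function.Injective
        (fun y : Fin (m + 1) → ZMod 2 => Enc (Fin.cons 0 y : Fin (m + 2) → ZMod 2)) := by
      intro y z hyz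
      funext k
      have h1 := hD (Fin.cons 0 y) k.succ
      have h2 := hD (Fin.cons 0 z) k.succ
      simp only [Fin.cons_succ] at h1 h2
      rw [← h1, ← h2]
      congr 1
      funext j
      obtain ⟨j, hj, hj'⟩ := j
      have : j = 0 := by
        rcases hj' with h | h
        · simp at h
        · exact Fin.ext h
      subst this
      simp
    have hc := Fintype.card_le_of_injective _ hinj
    simp only [Fintype.card_fun, ZMod.card, Fintype.card_fin] at hc
    exact (Nat.pow_le_pow_iff_right (by norm_num)).1 hc
  unfold minIndexCodeLength
  apply le_antisymm
  · exact Nat.sInf_le hup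
  · exact hlow _ (Nat.sInf_mem (s := {l : ℕ | HasIndexCode _ l}) ⟨_, hup⟩)
end

section
/- Let E be the side-information digraph on Fin 5 (clients 1,…,5, each wanting its own message) determined by the has-sets H₁ = {2}, H₂ = {3, 4}, H₃ = {1, 4}, H₄ = {1, 5}, H₅ = {2, 3} (i.e., E i j holds exactly for the pairs 1→2; 2→3, 2→4; 3→1, 3→4; 4→1, 4→5; 5→2, 5→3). Then minrk₂(E) = 3; in particular, by the equality of minrk₂ with the minimum linear index code length, the linear code transmitting x₁ + x₂, x₃ + x₅, and x₂ + x₃ + x₄ is a linear index code for E of minimum possible length among linear index codes. -/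
/-- The side-information digraph on 5 clients (0-indexed) given by the has-sets
`H₀ = {1}`, `H₁ = {2, 3}`, `H₂ = {0, 3}`, `H₃ = {0, 4}`, `H₄ = {1, 2}`. -/
def exampleDigraph5 : Fin 5 → Fin 5 → Prop := fun i j =>
  (i = 0 ∧ j = 1) ∨
  (i = 1 ∧ (j = 2 ∨ j = 3)) ∨
  (i = 2 ∧ (j = 0 ∨ j = 3)) ∨
  (i = 3 ∧ (j = 0 ∨ j = 4)) ∨
  (i = 4 ∧ (j = 1 ∨ j = 2))

theorem three_le_rank_of_fits (A : Matrix (Fin 5) (Fin 5) (ZMod 2))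
    (hA : Fits exampleDigraph5 A) : 3 ≤ A.rank := by
  obtain ⟨h1, h0⟩ := hA
  have e : (A.submatrix ![0, 4, 1] ![0, 4, 1]).det = 1 := by
    have a1 : A 0 4 = 0 := h0 _ _ (by decide) (by simp [exampleDigraph5])
    have a2 : A 4 0 = 0 := h0 _ _ (by decide) (by simp [exampleDigraph5])
    have a3 : A 1 0 = 0 := h0 _ _ (by decide) (by simp [exampleDigraph5])
    have a4 : A 1 4 = 0 := h0 _ _ (by decide) (by simp [exampleDigraph5])
    rw [Matrix.det_fin_three]
    simp [h1, a1, a2, a3, a4]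
  have hu : IsUnit (A.submatrix ![0, 4, 1] ![0, 4, 1]) := by
    rw [Matrix.isUnit_iff_isUnit_det, e]; exact isUnit_one
  have hr := Matrix.rank_of_isUnit _ hu
  have hle : (A.submatrix ![0, 4, 1] ![0, 4, 1]).rank ≤ A.rank :=
    Matrix.rank_submatrix_le _ _ _
  rw [Fintype.card_fin] at hr
  omega

theorem three_le_length {ℓ : ℕ} (h : HasIndexCode exampleDigraph5 ℓ) : 3 ≤ ℓ := by
  obtain ⟨Enc, Dec, hD⟩ := h
  have hinj : Function.Injective
      (fun v : Fin 3 → ZMod 2 => Enc ![v 0, v 2, 0, 0, v 1]) := by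
    intro v w hvw
    simp only at hvw
    have key : ∀ i : Fin 5,
        (∀ j, exampleDigraph5 i j → (![v 0, v 2, 0, 0, v 1] : Fin 5 → ZMod 2) j
          = (![w 0, w 2, 0, 0, w 1] : Fin 5 → ZMod 2) j) →
        (![v 0, v 2, 0, 0, v 1] : Fin 5 → ZMod 2) i
          = (![w 0, w 2, 0, 0, w 1] : Fin 5 → ZMod 2) i := by
      intro i hi
      rw [← hD ![v 0, v 2, 0, 0, v 1] i, ← hD ![w 0, w 2, 0, 0, w 1] i, hvw]
      congr 1
      funext j
      exact hi j.1 j.2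
    have k1 : v 2 = w 2 := key 1 (by
      intro j hj; fin_cases j <;> simp [exampleDigraph5] at hj ⊢)
    have k0 : v 0 = w 0 := key 0 (by
      intro j hj; fin_cases j <;> simp [exampleDigraph5, k1] at hj ⊢)
    have k4 : v 1 = w 1 := key 4 (by
      intro j hj; fin_cases j <;> simp [exampleDigraph5, k1] at hj ⊢)
    funext j
    fin_cases j
    · exact k0
    · exact k4
    · exact k1
  have hc := Fintype.card_le_of_injective _ hinj
  simp only [Fintype.card_fun, ZMod.card, Fintype.card_fin] at hc
  exact (Nat.pow_le_pow_iff_right (by norm_num)).1 hc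

theorem exists_fits_rank_three :
    ∃ A : Matrix (Fin 5) (Fin 5) (ZMod 2), Fits exampleDigraph5 A ∧ A.rank = 3 := by
  have hf : Fits exampleDigraph5
      ((!![1, 0, 0; 0, 0, 1; 1, 0, 1; 1, 1, 1; 0, 1, 0] : Matrix (Fin 5) (Fin 3) (ZMod 2)) *
        (!![1, 1, 0, 0, 0; 0, 0, 1, 0, 1; 0, 1, 1, 1, 0] : Matrix (Fin 3) (Fin 5) (ZMod 2))) := by
    unfold Fits exampleDigraph5
    decide
  refine ⟨_, hf, le_antisymm ?_ (three_le_rank_of_fits _ hf)⟩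
  exact (Matrix.rank_mul_le_left _ _).trans
    ((Matrix.rank_le_card_width _).trans (by simp))

/-- For the 5-client example, `minrk₂ = 3`; the linear code transmitting
`x₀ + x₁`, `x₂ + x₄` and `x₁ + x₂ + x₃` is a linear index code, and (by the equality of
`minrk₂` with the minimum linear index code length) no linear index code is shorter. -/
theorem example5_minrk2_eq_three :
    minrk2 exampleDigraph5 = 3 ∧
    IsLinearMap (ZMod 2)
      (fun x : Fin 5 → ZMod 2 => ![x 0 + x 1, x 2 + x 4, x 1 + x 2 + x 3]) ∧
    IsIndexCode exampleDigraph5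
      (fun x : Fin 5 → ZMod 2 => ![x 0 + x 1, x 2 + x 4, x 1 + x 2 + x 3]) ∧
    ∀ ℓ : ℕ, HasLinearIndexCode exampleDigraph5 ℓ → 3 ≤ ℓ := by
  refine ⟨?_, ?_, ?_, ?_⟩
  · unfold minrk2
    refine le_antisymm (Nat.sInf_le exists_fits_rank_three) ?_
    refine le_csInf ⟨3, exists_fits_rank_three⟩ ?_
    rintro r ⟨A, hA, rfl⟩
    exact three_le_rank_of_fits A hA
  · constructor
    · intro x y
      funext j
      fin_cases j <;> simp <;> ring
    · intro c x
      funext j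
      fin_cases j <;> simp <;> ring
  · have e1 : exampleDigraph5 0 1 := by simp [exampleDigraph5]
    have e2 : exampleDigraph5 1 2 := by simp [exampleDigraph5]
    have e3 : exampleDigraph5 1 3 := by simp [exampleDigraph5]
    have e4 : exampleDigraph5 2 0 := by simp [exampleDigraph5]
    have e5 : exampleDigraph5 2 3 := by simp [exampleDigraph5]
    have e6 : exampleDigraph5 3 0 := by simp [exampleDigraph5]
    have e7 : exampleDigraph5 3 4 := by simp [exampleDigraph5]
    have e9 : exampleDigraph5 4 2 := by simp [exampleDigraph5]
    refine ⟨fun i => match i with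
      | 0 => fun c s => c 0 + s ⟨1, e1⟩
      | 1 => fun c s => c 2 + s ⟨2, e2⟩ + s ⟨3, e3⟩
      | 2 => fun c s => c 0 + c 2 + s ⟨0, e4⟩ + s ⟨3, e5⟩
      | 3 => fun c s => c 0 + c 1 + c 2 + s ⟨0, e6⟩ + s ⟨4, e7⟩
      | 4 => fun c s => c 1 + s ⟨2, e9⟩, ?_⟩
    intro x i
    have h2 : (2 : ZMod 2) = 0 := rfl
    fin_cases i <;> simp <;> ring_nf <;> simp [h2]
  · rintro ℓ ⟨Enc, _, h⟩
    exact three_le_length ⟨Enc, h⟩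
end

section
/- Let E be the side-information digraph on Fin 4 (clients 1,…,4, each wanting its own message) determined by the has-sets H₁ = {4}, H₂ = {1, 3}, H₃ = {1, 2}, H₄ = {2, 3} (i.e., E i j holds exactly for the pairs 1→4; 2→1, 2→3; 3→1, 3→2; 4→2, 4→3). Then the minimal index code length satisfies ℓ*(E) = 2, achieved by the linear index code transmitting x₁ + x₂ + x₃ and x₁ + x₄. -/
/-- The side-information digraph on 4 clients (0-indexed) given by the has-sets
`H₀ = {3}`, `H₁ = {0, 2}`, `H₂ = {0, 1}`, `H₃ = {1, 2}`. -/
def exampleDigraph4 : Fin 4 → Fin 4 → Prop := fun i j =>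
  (i = 0 ∧ j = 3) ∨
  (i = 1 ∧ (j = 0 ∨ j = 2)) ∨
  (i = 2 ∧ (j = 0 ∨ j = 1)) ∨
  (i = 3 ∧ (j = 1 ∨ j = 2))

/-- Any index code for the example has length at least 2: on the messages supported on the
acyclic set `{0, 1}` the encoding map is injective. -/
theorem example4_two_le {ℓ : ℕ} (h : HasIndexCode exampleDigraph4 ℓ) : 2 ≤ ℓ := by
  obtain ⟨Enc, Dec, hD⟩ := h
  have hinj : Function.Injective
      (fun p : ZMod 2 × ZMod 2 => Enc ![p.1, p.2, 0, 0]) := by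
    rintro ⟨a, b⟩ ⟨c, d⟩ he
    have he' : Enc ![a, b, 0, 0] = Enc ![c, d, 0, 0] := he
    have hac : a = c := by
      have h1 := hD ![a, b, 0, 0] 0
      have h2 := hD ![c, d, 0, 0] 0
      have hs : (fun j : {j : Fin 4 // exampleDigraph4 0 j} =>
          (![a, b, 0, 0] : Fin 4 → ZMod 2) j.1) = fun j => ![c, d, 0, 0] j.1 := by
        funext ⟨j, hj⟩
        have : j = 3 := by simpa [exampleDigraph4] using hj
        subst this
        rfl
      rw [he', hs, h2] at h1
      simpa using h1.symm
    subst hac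
    have hbd : b = d := by
      have h1 := hD ![a, b, 0, 0] 1
      have h2 := hD ![a, d, 0, 0] 1
      have hs : (fun j : {j : Fin 4 // exampleDigraph4 1 j} =>
          (![a, b, 0, 0] : Fin 4 → ZMod 2) j.1) = fun j => ![a, d, 0, 0] j.1 := by
        funext ⟨j, hj⟩
        have : j = 0 ∨ j = 2 := by simpa [exampleDigraph4] using hj
        rcases this with rfl | rfl <;> rfl
      rw [he', hs, h2] at h1
      simpa using h1.symm
    rw [hbd]
  have hc := Fintype.card_le_of_injective _ hinj
  simp only [Fintype.card_prod, ZMod.card, Fintype.card_fun, Fintype.card_fin] at hc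
  by_contra hlt
  have : ℓ = 0 ∨ ℓ = 1 := by omega
  rcases this with rfl | rfl <;> simp at hc

/-- The explicit code is an index code. -/
theorem example4_code : IsIndexCode exampleDigraph4
      (fun x : Fin 4 → ZMod 2 => ![x 0 + x 1 + x 2, x 0 + x 3]) := by
  have e03 : exampleDigraph4 0 3 := by simp [exampleDigraph4]
  have e10 : exampleDigraph4 1 0 := by simp [exampleDigraph4]
  have e12 : exampleDigraph4 1 2 := by simp [exampleDigraph4]
  have e20 : exampleDigraph4 2 0 := by simp [exampleDigraph4]
  have e21 : exampleDigraph4 2 1 := by simp [exampleDigraph4]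
  have e31 : exampleDigraph4 3 1 := by simp [exampleDigraph4]
  have e32 : exampleDigraph4 3 2 := by simp [exampleDigraph4]
  have key : ∀ i : Fin 4, ∃ D : (Fin 2 → ZMod 2) → ({j : Fin 4 // exampleDigraph4 i j} → ZMod 2) →
      ZMod 2, ∀ x : Fin 4 → ZMod 2,
        D ![x 0 + x 1 + x 2, x 0 + x 3] (fun j => x j.1) = x i := by
    intro i
    fin_cases i
    · refine ⟨fun y s => y 1 - s ⟨3, e03⟩, fun x => ?_⟩
      simp
    · refine ⟨fun y s => y 0 - s ⟨0, e10⟩ - s ⟨2, e12⟩, fun x => ?_⟩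
      simp
      ring
    · refine ⟨fun y s => y 0 - s ⟨0, e20⟩ - s ⟨1, e21⟩, fun x => ?_⟩
      simp
      ring
    · refine ⟨fun y s => y 1 - (y 0 - s ⟨1, e31⟩ - s ⟨2, e32⟩), fun x => ?_⟩
      simp
      ring
  choose D hD using key
  exact ⟨D, fun x i => hD i x⟩

/-- For the 4-client example, the minimal index code length is 2, achieved by the linear
index code transmitting `x₀ + x₁ + x₂` and `x₀ + x₃`. -/
theorem example4_minIndexCodeLength_eq_two :
    minIndexCodeLength exampleDigraph4 = 2 ∧
    IsLinearMap (ZMod 2)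
      (fun x : Fin 4 → ZMod 2 => ![x 0 + x 1 + x 2, x 0 + x 3]) ∧
    IsIndexCode exampleDigraph4
      (fun x : Fin 4 → ZMod 2 => ![x 0 + x 1 + x 2, x 0 + x 3]) := by
  refine ⟨?_, ?_, example4_code⟩
  · apply le_antisymm
    · exact Nat.sInf_le ⟨_, example4_code⟩
    · exact le_csInf ⟨2, _, example4_code⟩ fun ℓ h => example4_two_le h
  · constructor
    · intro x y
      ext i
      fin_cases i <;> simp <;> ring
    · intro c x
      ext i
      fin_cases i <;> simp <;> ring
end

section
/- Let E be the side-information digraph on Fin 4 with E i j holding exactly for the pairs 1→4; 2→1, 2→3; 3→1, 3→2; 4→2, 4→3. Then every family of pairwise vertex-disjoint directed cycles of E has at most one element; hence the bound ℓ*(E) ≤ n − α obtained from vertex-disjoint directed cycles gives only ℓ*(E) ≤ 3 for this instance, while ℓ*(E) = 2. -/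
theorem aux_succ {c : List (Fin 4)} (h : IsDirCycle exampleDigraph4 c) {v : Fin 4} (hv : v ∈ c) :
    ∃ w ∈ c, exampleDigraph4 v w := by
  obtain ⟨t, rfl⟩ := List.get_of_mem hv
  exact ⟨_, List.get_mem _ _, h.2.2 t⟩

/-- Every directed cycle covers one of three vertex sets, which pairwise intersect. -/
theorem aux_cycle_s17 {c : List (Fin 4)} (h : IsDirCycle exampleDigraph4 c) :
    (1 ∈ c ∧ 2 ∈ c) ∨ (0 ∈ c ∧ 3 ∈ c ∧ 1 ∈ c) ∨ (0 ∈ c ∧ 3 ∈ c ∧ 2 ∈ c) := by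
  have h0 : (0 : Fin 4) ∈ c → 3 ∈ c := fun hv => by
    obtain ⟨w, hw, e⟩ := aux_succ h hv
    simp [exampleDigraph4] at e
    exact e ▸ hw
  have h1 : (1 : Fin 4) ∈ c → 0 ∈ c ∨ 2 ∈ c := fun hv => by
    obtain ⟨w, hw, e⟩ := aux_succ h hv
    simp [exampleDigraph4] at e
    rcases e with rfl | rfl <;> simp [hw]
  have h2 : (2 : Fin 4) ∈ c → 0 ∈ c ∨ 1 ∈ c := fun hv => by
    obtain ⟨w, hw, e⟩ := aux_succ h hv
    simp [exampleDigraph4] at e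
    rcases e with rfl | rfl <;> simp [hw]
  have h3 : (3 : Fin 4) ∈ c → 1 ∈ c ∨ 2 ∈ c := fun hv => by
    obtain ⟨w, hw, e⟩ := aux_succ h hv
    simp [exampleDigraph4] at e
    rcases e with rfl | rfl <;> simp [hw]
  have hne : ∃ v, v ∈ c := List.exists_mem_of_length_pos (by have := h.1; omega)
  have : (0 : Fin 4) ∈ c ∨ (1 : Fin 4) ∈ c ∨ (2 : Fin 4) ∈ c ∨ (3 : Fin 4) ∈ c := by
    obtain ⟨v, hv⟩ := hne
    fin_cases v <;> simp_all
  tauto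

/-- The length-two code sending `x0 + x3` and `x0 + x1 + x2`. -/
theorem aux_code : HasIndexCode exampleDigraph4 2 := by
  refine ⟨fun x => ![x 0 + x 3, x 0 + x 1 + x 2], ?_⟩
  have e03 : exampleDigraph4 0 3 := by simp [exampleDigraph4]
  have e10 : exampleDigraph4 1 0 := by simp [exampleDigraph4]
  have e12 : exampleDigraph4 1 2 := by simp [exampleDigraph4]
  have e20 : exampleDigraph4 2 0 := by simp [exampleDigraph4]
  have e21 : exampleDigraph4 2 1 := by simp [exampleDigraph4]
  have e31 : exampleDigraph4 3 1 := by simp [exampleDigraph4]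
  have e32 : exampleDigraph4 3 2 := by simp [exampleDigraph4]
  refine ⟨fun i => match i with
    | 0 => fun y s => y 0 - s ⟨3, e03⟩
    | 1 => fun y s => y 1 - s ⟨0, e10⟩ - s ⟨2, e12⟩
    | 2 => fun y s => y 1 - s ⟨0, e20⟩ - s ⟨1, e21⟩
    | 3 => fun y s => y 0 - y 1 + s ⟨1, e31⟩ + s ⟨2, e32⟩, ?_⟩
  intro x i
  fin_cases i <;> simp <;> ring

theorem aux_lower {l : ℕ} (h : HasIndexCode exampleDigraph4 l) : 2 ≤ l := by
  obtain ⟨Enc, Dec, hD⟩ := h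
  let f : ZMod 2 × ZMod 2 → (Fin l → ZMod 2) := fun p => Enc ![p.1, p.2, 0, 0]
  have hf : Function.Injective f := by
    rintro ⟨a, b⟩ ⟨a', b'⟩ hab
    have hab : Enc ![a, b, 0, 0] = Enc ![a', b', 0, 0] := hab
    have ha : a = a' := by
      have h1 := hD ![a, b, 0, 0] 0
      have h2 := hD ![a', b', 0, 0] 0
      have hs : (fun j : {j : Fin 4 // exampleDigraph4 0 j} => (![a, b, 0, 0] : Fin 4 → ZMod 2) j.1)
          = fun j => (![a', b', 0, 0] : Fin 4 → ZMod 2) j.1 := by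
        funext ⟨j, hj⟩
        simp [exampleDigraph4] at hj
        subst hj
        rfl
      rw [hab, hs, h2] at h1
      simpa using h1.symm
    subst ha
    have hb : b = b' := by
      have h1 := hD ![a, b, 0, 0] 1
      have h2 := hD ![a, b', 0, 0] 1
      have hs : (fun j : {j : Fin 4 // exampleDigraph4 1 j} => (![a, b, 0, 0] : Fin 4 → ZMod 2) j.1)
          = fun j => (![a, b', 0, 0] : Fin 4 → ZMod 2) j.1 := by
        funext ⟨j, hj⟩
        simp [exampleDigraph4] at hj
        rcases hj with rfl | rfl <;> rfl
      rw [hab, hs, h2] at h1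
      simpa using h1.symm
    rw [hb]
  have hc := Fintype.card_le_of_injective f hf
  simp [ZMod.card] at hc
  by_contra hl
  have : l = 0 ∨ l = 1 := by omega
  rcases this with rfl | rfl <;> simp at hc

/-- For the 4-client example, every family of pairwise vertex-disjoint directed cycles has
at most one element; hence the cycle bound `ℓ* ≤ n - α` only gives `ℓ* ≤ 3`, whereas in fact
`ℓ* = 2`. -/
theorem example4_cycle_bound_not_tight :
    (∀ (α : ℕ) (cyc : Fin α → List (Fin 4)),
      (∀ a : Fin α, IsDirCycle exampleDigraph4 (cyc a)) →
      (∀ a b : Fin α, a ≠ b → ∀ v : Fin 4, v ∈ cyc a → v ∉ cyc b) →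
      α ≤ 1) ∧
    minIndexCodeLength exampleDigraph4 ≤ 3 ∧
    minIndexCodeLength exampleDigraph4 = 2 := by
  have h2 : minIndexCodeLength exampleDigraph4 = 2 :=
    le_antisymm (Nat.sInf_le aux_code)
      (aux_lower (Nat.sInf_mem (s := {l | HasIndexCode exampleDigraph4 l}) ⟨2, aux_code⟩))
  refine ⟨?_, by omega, h2⟩
  intro α cyc hc hd
  by_contra hα
  have hd' := hd ⟨0, by omega⟩ ⟨1, by omega⟩ (by simp)
  have c0 := aux_cycle_s17 (hc ⟨0, by omega⟩)
  have c1 := aux_cycle_s17 (hc ⟨1, by omega⟩)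
  have d0 := hd' 0
  have d1 := hd' 1
  have d2 := hd' 2
  tauto
end
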